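/- Let σ, τ be real numbers with σ > 0 and τ > 0, and let b₁, b₂, b₁', b₂' be nonzero integers. Then the identity (4/(b₁b₂u²))·sinh(σb₁u/2)·sinh(τb₂u/2) = (4/(b₁'b₂'u²))·sinh(σb₁'u/2)·sinh(τb₂'u/2) holds for every real u ≠ 0 if and only if either (i) |b₁'| = |b₁| and |b₂'| = |b₂|, or (ii) there exist signs ε, δ ∈ {1, −1} such that σb₁ = ε·τb₂' and τb₂ = δ·σb₁'. -/

import Mathlib

/-!
With `a = σ b₁`, `b = τ b₂`, the value `S_b(u)` is `4 σ τ / u²` times the function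
`v ↦ sinh (a v) / a * (sinh (b v) / b)` at `v = u / 2`. This function is even in `a` and in `b`
and symmetric in the pair, so it depends only on the multiset `{a², b²}`. Conversely, its Taylor
coefficients of degree 4 and 6 at `0` determine `a² + b²` and `a² b²`, hence `{a², b²}`.
-/

open Topology

/-- The product of the two normalized hyperbolic sines in the localization value: up to a factor
depending only on `σ`, `τ` and `u`, its value at `u / 2` is `S_b(u)` when `a = σ b₁` and `b = τ b₂`.
It is only meaningful for nonzero `a` and `b`; division by zero makes it `0` otherwise. -/
noncomputable def sinhProd (a b u : ℝ) : ℝ :=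
  Real.sinh (a * u) / a * (Real.sinh (b * u) / b)

/-- The value `S_b` at `u` of the localization formula for the circle action `ψ_b` on `S² × S²`
with sphere areas `σ` and `τ`, for real weights `b₁` and `b₂`. -/
noncomputable def localizationValue (σ τ b₁ b₂ u : ℝ) : ℝ :=
  4 / (b₁ * b₂ * u ^ 2) * (Real.sinh (σ * b₁ * u / 2) * Real.sinh (τ * b₂ * u / 2))

theorem eq_and_eq_or_eq_and_eq_of_add_eq_add_of_mul_eq_mul {R : Type*} [CommRing R]
    [NoZeroDivisors R] {x y z w : R} (hadd : x + y = z + w) (hmul : x * y = z * w) :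
    (x = z ∧ y = w) ∨ (x = w ∧ y = z) := by
  have hroot : (x - z) * (x - w) = 0 := by linear_combination x * hadd - hmul
  rcases mul_eq_zero.1 hroot with hxz | hxw
  · exact .inl ⟨sub_eq_zero.1 hxz, by linear_combination hadd - hxz⟩
  · exact .inr ⟨sub_eq_zero.1 hxw, by linear_combination hadd - hxw⟩

theorem abs_eq_abs_iff_exists_sign_mul {R : Type*} [Ring R] [LinearOrder R] {x y : R} :
    |x| = |y| ↔ ∃ ε : R, (ε = 1 ∨ ε = -1) ∧ x = ε * y := by
  simp [abs_eq_abs, or_and_right, exists_or]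

theorem iteratedDeriv_even_cosh_const_mul_zero (a : ℝ) (n : ℕ) :
    iteratedDeriv (2 * n) (fun u ↦ Real.cosh (a * u)) 0 = a ^ (2 * n) := by
  simp [iteratedDeriv_comp_const_mul Real.contDiff_cosh]

theorem sinh_mul_sinh_eq_cosh_add_sub_cosh_sub (x y : ℝ) :
    Real.sinh x * Real.sinh y = (Real.cosh (x + y) - Real.cosh (x - y)) / 2 := by
  rw [Real.cosh_add, Real.cosh_sub]
  ring

theorem sinh_const_mul_div_eq_of_abs_eq {a c : ℝ} (h : |a| = |c|) (u : ℝ) :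
    Real.sinh (a * u) / a = Real.sinh (c * u) / c := by
  rcases abs_eq_abs.1 h with rfl | rfl <;> simp

theorem sinhProd_comm (a b : ℝ) : sinhProd a b = sinhProd b a :=
  funext fun _ ↦ mul_comm _ _

theorem sinhProd_eq_of_abs_eq {a b c d : ℝ} (hac : |a| = |c|) (hbd : |b| = |d|) :
    sinhProd a b = sinhProd c d := by
  funext u
  rw [sinhProd, sinhProd, sinh_const_mul_div_eq_of_abs_eq hac, sinh_const_mul_div_eq_of_abs_eq hbd]

theorem iteratedDeriv_even_sinhProd_zero (a b : ℝ) (n : ℕ) :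
    iteratedDeriv (2 * n) (sinhProd a b) 0 =
      ((a + b) ^ (2 * n) - (a - b) ^ (2 * n)) / (2 * (a * b)) := by
  have hcosh : sinhProd a b = fun u ↦
      ((fun u ↦ Real.cosh ((a + b) * u)) - fun u ↦ Real.cosh ((a - b) * u)) u / (2 * (a * b)) := by
    funext u
    rw [sinhProd, div_mul_div_comm, sinh_mul_sinh_eq_cosh_add_sub_cosh_sub, ← add_mul, ← sub_mul,
      div_div, Pi.sub_apply]
  rw [hcosh, iteratedDeriv_div_const, iteratedDeriv_sub (by fun_prop) (by fun_prop),
    iteratedDeriv_even_cosh_const_mul_zero, iteratedDeriv_even_cosh_const_mul_zero]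

section

variable {a b c d : ℝ}

theorem iteratedDeriv_four_sinhProd_zero (ha : a ≠ 0) (hb : b ≠ 0) :
    iteratedDeriv 4 (sinhProd a b) 0 = 4 * (a ^ 2 + b ^ 2) := by
  rw [iteratedDeriv_even_sinhProd_zero a b 2]
  field_simp
  ring

theorem iteratedDeriv_six_sinhProd_zero (ha : a ≠ 0) (hb : b ≠ 0) :
    iteratedDeriv 6 (sinhProd a b) 0 = 6 * (a ^ 2 + b ^ 2) ^ 2 + 8 * (a ^ 2 * b ^ 2) := by
  rw [iteratedDeriv_even_sinhProd_zero a b 3]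
  field_simp
  ring

theorem abs_eq_abs_or_of_sinhProd_eventuallyEq (ha : a ≠ 0) (hb : b ≠ 0) (hc : c ≠ 0)
    (hd : d ≠ 0) (h : sinhProd a b =ᶠ[𝓝 0] sinhProd c d) :
    (|a| = |c| ∧ |b| = |d|) ∨ (|a| = |d| ∧ |b| = |c|) := by
  have hfour := h.iteratedDeriv_eq 4
  have hsix := h.iteratedDeriv_eq 6
  rw [iteratedDeriv_four_sinhProd_zero ha hb, iteratedDeriv_four_sinhProd_zero hc hd] at hfour
  rw [iteratedDeriv_six_sinhProd_zero ha hb, iteratedDeriv_six_sinhProd_zero hc hd] at hsix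
  have hadd : a ^ 2 + b ^ 2 = c ^ 2 + d ^ 2 := by linarith
  have hmul : a ^ 2 * b ^ 2 = c ^ 2 * d ^ 2 := by
    rw [hadd] at hsix
    linarith
  simpa only [sq_eq_sq_iff_abs_eq_abs] using
    eq_and_eq_or_eq_and_eq_of_add_eq_add_of_mul_eq_mul hadd hmul

theorem sinhProd_eq_iff (ha : a ≠ 0) (hb : b ≠ 0) (hc : c ≠ 0) (hd : d ≠ 0) :
    sinhProd a b = sinhProd c d ↔ (|a| = |c| ∧ |b| = |d|) ∨ (|a| = |d| ∧ |b| = |c|) := by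
  constructor
  · exact fun h ↦ abs_eq_abs_or_of_sinhProd_eventuallyEq ha hb hc hd (.of_eq h)
  · rintro (⟨hac, hbd⟩ | ⟨had, hbc⟩)
    · exact sinhProd_eq_of_abs_eq hac hbd
    · rw [sinhProd_comm c d, sinhProd_eq_of_abs_eq had hbc]

end

section

variable {σ τ : ℝ}

theorem localizationValue_eq_mul_sinhProd (hσ : σ ≠ 0) (hτ : τ ≠ 0) (b₁ b₂ u : ℝ) :
    localizationValue σ τ b₁ b₂ u =
      4 * (σ * τ) / u ^ 2 * sinhProd (σ * b₁) (τ * b₂) (u / 2) := by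
  rw [localizationValue, sinhProd, mul_div_assoc, mul_div_assoc]
  field_simp

theorem forall_localizationValue_eq_iff_sinhProd_eq (hσ : σ ≠ 0) (hτ : τ ≠ 0)
    (b₁ b₂ b₁' b₂' : ℝ) :
    (∀ u ≠ 0, localizationValue σ τ b₁ b₂ u = localizationValue σ τ b₁' b₂' u) ↔
      sinhProd (σ * b₁) (τ * b₂) = sinhProd (σ * b₁') (τ * b₂') := by
  simp only [localizationValue_eq_mul_sinhProd hσ hτ]
  refine ⟨fun h ↦ funext fun v ↦ ?_, fun h u _ ↦ by rw [h]⟩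
  obtain rfl | hv := eq_or_ne v 0
  · simp [sinhProd]
  · have hfactor : 4 * (σ * τ) / (2 * v) ^ 2 ≠ 0 := by positivity
    simpa using mul_left_cancel₀ hfactor (h (2 * v) (by positivity))

theorem S2xS2_S_eq_iff_general (hσ : σ ≠ 0) (hτ : τ ≠ 0) {b₁ b₂ b₁' b₂' : ℝ}
    (h1 : b₁ ≠ 0) (h2 : b₂ ≠ 0) (h1' : b₁' ≠ 0) (h2' : b₂' ≠ 0) :
    (∀ u ≠ 0, localizationValue σ τ b₁ b₂ u = localizationValue σ τ b₁' b₂' u) ↔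
      ((|b₁'| = |b₁| ∧ |b₂'| = |b₂|) ∨
        ∃ ε δ : ℝ, (ε = 1 ∨ ε = -1) ∧ (δ = 1 ∨ δ = -1) ∧
          σ * b₁ = ε * (τ * b₂') ∧ τ * b₂ = δ * (σ * b₁')) := by
  have habs {r x y : ℝ} (hr : r ≠ 0) : |r * x| = |r * y| ↔ |y| = |x| := by
    rw [abs_mul, abs_mul, mul_right_inj' (abs_ne_zero.2 hr), eq_comm]
  rw [forall_localizationValue_eq_iff_sinhProd_eq hσ hτ,
    sinhProd_eq_iff (mul_ne_zero hσ h1) (mul_ne_zero hτ h2) (mul_ne_zero hσ h1')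
      (mul_ne_zero hτ h2'),
    habs hσ, habs hτ]
  refine or_congr_right ?_
  rw [abs_eq_abs_iff_exists_sign_mul, abs_eq_abs_iff_exists_sign_mul]
  constructor
  · rintro ⟨⟨ε, hε, hcross₁⟩, δ, hδ, hcross₂⟩
    exact ⟨ε, δ, hε, hδ, hcross₁, hcross₂⟩
  · rintro ⟨ε, δ, hε, hδ, hcross₁, hcross₂⟩
    exact ⟨⟨ε, hε, hcross₁⟩, δ, hδ, hcross₂⟩

end

/-- Proposition 3.15 (Prok01) of the paper: for nonzero integers `b₁ b₂ b₁' b₂'` and sphere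
areas `σ, τ > 0`, the localization values `S_b` and `S_b'` of the circle actions `ψ_b`, `ψ_b'`
on `S² × S²` agree as functions of `u` iff `(|b₁'|, |b₂'|) = (|b₁|, |b₂|)` or the cross
relations `σb₁ = ±τb₂'`, `τb₂ = ±σb₁'` hold. -/
theorem S2xS2_S_eq_iff
    (σ τ : ℝ) (hσ : 0 < σ) (hτ : 0 < τ)
    (b₁ b₂ b₁' b₂' : ℤ) (h1 : b₁ ≠ 0) (h2 : b₂ ≠ 0) (h1' : b₁' ≠ 0) (h2' : b₂' ≠ 0) :
    (∀ u : ℝ, u ≠ 0 →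
        4 / ((b₁ : ℝ) * (b₂ : ℝ) * u ^ 2) *
            (Real.sinh (σ * (b₁ : ℝ) * u / 2) * Real.sinh (τ * (b₂ : ℝ) * u / 2)) =
        4 / ((b₁' : ℝ) * (b₂' : ℝ) * u ^ 2) *
            (Real.sinh (σ * (b₁' : ℝ) * u / 2) * Real.sinh (τ * (b₂' : ℝ) * u / 2))) ↔
      ((|b₁'| = |b₁| ∧ |b₂'| = |b₂|) ∨
        ∃ ε δ : ℝ, (ε = 1 ∨ ε = -1) ∧ (δ = 1 ∨ δ = -1) ∧
          σ * (b₁ : ℝ) = ε * (τ * (b₂' : ℝ)) ∧ τ * (b₂ : ℝ) = δ * (σ * (b₁' : ℝ))) := by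
  simpa only [localizationValue, ← Int.cast_abs, Int.cast_inj] using
    S2xS2_S_eq_iff_general hσ.ne' hτ.ne' (Int.cast_ne_zero.2 h1) (Int.cast_ne_zero.2 h2)
      (Int.cast_ne_zero.2 h1') (Int.cast_ne_zero.2 h2')
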